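/- Let p be a prime with p ≡ 1 (mod 3), and let k, n be nonnegative integers such that p does not divide 3n+2. Then (p−1)·A_3(p^k·n + (2p^k − 2)/3) = (p^{k+1} − 1)·A_3(n). (Here (2p^k − 2)/3 is an integer since p ≡ 1 (mod 3).) -/

import Mathlib

/-- The hook length of the cell `(i, j)` in a Young diagram `μ`:
arm length + leg length + 1. -/
def YoungDiagram.hookLength (μ : YoungDiagram) (i j : ℕ) : ℕ :=
  μ.rowLen i + μ.colLen j - i - j - 1

/-- A Young diagram (equivalently, a partition) is a 3-core if none of its
hook numbers is divisible by 3. -/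
def YoungDiagram.IsThreeCore (μ : YoungDiagram) : Prop :=
  ∀ c ∈ μ.cells, ¬ (3 ∣ μ.hookLength c.1 c.2)

/-- `a3 n` is the number of 3-core partitions of `n`. -/
noncomputable def a3 (n : ℕ) : ℕ :=
  Nat.card {μ : YoungDiagram // μ.card = n ∧ μ.IsThreeCore}

/-- `A3 n` is the number of partition pairs of `n` in which each partition is a 3-core. -/
noncomputable def A3 (n : ℕ) : ℕ :=
  Nat.card {p : YoungDiagram × YoungDiagram //
    p.1.card + p.2.card = n ∧ p.1.IsThreeCore ∧ p.2.IsThreeCore}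

/-- `B3 n` is the number of partition triples of `n` in which each partition is a 3-core. -/
noncomputable def B3 (n : ℕ) : ℕ :=
  Nat.card {p : YoungDiagram × YoungDiagram × YoungDiagram //
    p.1.card + p.2.1.card + p.2.2.card = n ∧
    p.1.IsThreeCore ∧ p.2.1.IsThreeCore ∧ p.2.2.IsThreeCore}

/-!
The abacus of a `3`-core `μ` gives a bijection between `3`-cores and Eisenstein integers `α ≡ 1`
modulo `3`, with `3|μ| + 1 = N(α)`. Hence `A3 n` counts the pairs `(α, β)` with `α ≡ β ≡ 1` and
`N(α) + N(β) = 3n + 2`. This equation forces `α` and `β` to be prime to `3`, and multiplying them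
by the six units normalizes their residues, so that `36 * A3 n` is the number `r(3n + 2)` of
elements `α + βj` of norm `3n + 2` in the quaternion order `ℤ⟨ω, j⟩`.

That order is Euclidean, and modulo a prime `p ≡ 1` modulo `3` it becomes the ring of `2 × 2`
matrices over `𝔽_p`. The annihilators of the `p + 1` lines of `𝔽_p²` are therefore principal left
ideals, each generated by an element of norm `p`. An element of norm `pm` lies in exactly one of
them, or in all of them if it is divisible by `p`; counting incidences gives the Hecke relation
`(p + 1) r(m) = r(pm) + p r(m/p)`, which is solved by the claimed formula.
-/

open Finset Matrix
open scoped LinearAlgebra.Projectivization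

/-! ### Eisenstein quaternions -/

/-- The norm form `a² - ab + b²` of `a + bω` in the Eisenstein integers, over an arbitrary ring. -/
def eisensteinForm {R : Type*} [CommRing R] (a b : R) : R := a ^ 2 - a * b + b ^ 2

lemma four_mul_eisensteinForm {R : Type*} [CommRing R] (a b : R) :
    4 * eisensteinForm a b = (2 * a - b) ^ 2 + 3 * b ^ 2 := by
  unfold eisensteinForm; ring

lemma eisensteinForm_comm {R : Type*} [CommRing R] (a b : R) :
    eisensteinForm a b = eisensteinForm b a := by
  unfold eisensteinForm; ring

lemma intCast_eisensteinForm {R : Type*} [CommRing R] (a b : ℤ) :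
    ((eisensteinForm a b : ℤ) : R) = eisensteinForm (a : R) (b : R) := by
  simp [eisensteinForm]

lemma eisensteinForm_nonneg (a b : ℤ) : 0 ≤ eisensteinForm a b := by
  nlinarith [four_mul_eisensteinForm a b, sq_nonneg (2 * a - b), sq_nonneg b]

lemma abs_right_le_eisensteinForm (a b : ℤ) : |b| ≤ 2 * eisensteinForm a b := by
  have hsq : |b| ≤ b ^ 2 := by
    simpa [Int.natAbs_sq] using Int.natAbs_le_self_sq b
  nlinarith [four_mul_eisensteinForm a b, sq_nonneg (2 * a - b), eisensteinForm_nonneg a b]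

lemma abs_left_le_eisensteinForm (a b : ℤ) : |a| ≤ 2 * eisensteinForm a b :=
  eisensteinForm_comm a b ▸ abs_right_le_eisensteinForm b a

lemma exists_abs_sub_mul_le (x : ℤ) {n : ℤ} (hn : 0 < n) : ∃ c : ℤ, |x - c * (2 * n)| ≤ n := by
  refine ⟨(x + n) / (2 * n), abs_le.mpr ?_⟩
  have hdiv := Int.ediv_mul_add_emod (x + n) (2 * n)
  have hnonneg := Int.emod_nonneg (x + n) (b := 2 * n) (by omega)
  have hlt := Int.emod_lt_of_pos (x + n) (b := 2 * n) (by omega)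
  constructor <;> linarith

-- Complete the square: round `b / n` first, then `(2a - c) / 2n`, where `c` is the reduced `b`.
lemma exists_eisensteinForm_sub_mul_le (a b : ℤ) {n : ℤ} (hn : 0 < n) :
    ∃ c d : ℤ, 16 * eisensteinForm (a - c * n) (b - d * n) ≤ 7 * n ^ 2 := by
  obtain ⟨d, hd⟩ := exists_abs_sub_mul_le (2 * b) hn
  obtain ⟨c, hc⟩ := exists_abs_sub_mul_le (2 * a - (b - d * n)) hn
  refine ⟨c, d, ?_⟩
  have hb := sq_le_sq' (abs_le.mp hd).1 (abs_le.mp hd).2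
  have ha := sq_le_sq' (abs_le.mp hc).1 (abs_le.mp hc).2
  linear_combination 4 * four_mul_eisensteinForm (a - c * n) (b - d * n) + 4 * ha + 3 * hb

/-- The quaternion order `ℤ⟨ω, j⟩` with `ω² + ω + 1 = 0`, `j² = -1` and `jω = ω̄j`; a quaternion
with coordinates `a, b, c, d` is `(a + bω) + (c + dω)j`. -/
abbrev EisensteinQuaternion := QuaternionAlgebra ℤ (-1) (-1) (-1)

namespace EisensteinQuaternion

/-- The reduced norm `x x̄` of an Eisenstein quaternion. -/
def reducedNorm (x : EisensteinQuaternion) : ℤ :=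
  eisensteinForm x.re x.imI + eisensteinForm x.imJ x.imK

lemma reducedNorm_mul (x y : EisensteinQuaternion) :
    reducedNorm (x * y) = reducedNorm x * reducedNorm y := by
  simp only [reducedNorm, eisensteinForm, QuaternionAlgebra.re_mul, QuaternionAlgebra.imI_mul,
    QuaternionAlgebra.imJ_mul, QuaternionAlgebra.imK_mul]
  ring

lemma reducedNorm_star (x : EisensteinQuaternion) : reducedNorm (star x) = reducedNorm x := by
  simp only [reducedNorm, eisensteinForm, QuaternionAlgebra.re_star, QuaternionAlgebra.imI_star,
    QuaternionAlgebra.imJ_star, QuaternionAlgebra.imK_star]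
  ring

lemma mul_star_eq_reducedNorm (x : EisensteinQuaternion) :
    x * star x = (reducedNorm x : EisensteinQuaternion) := by
  generalize hn : reducedNorm x = n
  ext
  · simp only [QuaternionAlgebra.re_mul, QuaternionAlgebra.re_star, QuaternionAlgebra.imI_star,
      QuaternionAlgebra.imJ_star, QuaternionAlgebra.imK_star, QuaternionAlgebra.re_intCast,
      Int.cast_id]
    rw [← hn, reducedNorm, eisensteinForm, eisensteinForm]
    ring
  all_goals
    simp only [QuaternionAlgebra.imI_mul, QuaternionAlgebra.imJ_mul, QuaternionAlgebra.imK_mul,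
      QuaternionAlgebra.re_star, QuaternionAlgebra.imI_star, QuaternionAlgebra.imJ_star,
      QuaternionAlgebra.imK_star, QuaternionAlgebra.imI_intCast, QuaternionAlgebra.imJ_intCast,
      QuaternionAlgebra.imK_intCast]
    ring

lemma reducedNorm_natCast (n : ℕ) : reducedNorm (n : EisensteinQuaternion) = n ^ 2 := by
  simp [reducedNorm, eisensteinForm]

lemma reducedNorm_nonneg (x : EisensteinQuaternion) : 0 ≤ reducedNorm x :=
  add_nonneg (eisensteinForm_nonneg _ _) (eisensteinForm_nonneg _ _)

lemma abs_coords_le_reducedNorm (x : EisensteinQuaternion) :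
    |x.re| ≤ 2 * reducedNorm x ∧ |x.imI| ≤ 2 * reducedNorm x ∧
      |x.imJ| ≤ 2 * reducedNorm x ∧ |x.imK| ≤ 2 * reducedNorm x := by
  have hre := abs_left_le_eisensteinForm x.re x.imI
  have hI := abs_right_le_eisensteinForm x.re x.imI
  have hJ := abs_left_le_eisensteinForm x.imJ x.imK
  have hK := abs_right_le_eisensteinForm x.imJ x.imK
  have h₁ := eisensteinForm_nonneg x.re x.imI
  have h₂ := eisensteinForm_nonneg x.imJ x.imK
  unfold reducedNorm
  refine ⟨?_, ?_, ?_, ?_⟩ <;> linarith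

lemma reducedNorm_eq_zero_iff {x : EisensteinQuaternion} : reducedNorm x = 0 ↔ x = 0 := by
  refine ⟨fun h ↦ ?_, ?_⟩
  · have hx := abs_coords_le_reducedNorm x
    simp only [h, mul_zero, abs_nonpos_iff] at hx
    ext <;> simp [hx]
  · rintro rfl
    simp [reducedNorm, eisensteinForm]

lemma reducedNorm_pos {x : EisensteinQuaternion} (hx : x ≠ 0) : 0 < reducedNorm x :=
  (reducedNorm_nonneg x).lt_of_ne' (mt reducedNorm_eq_zero_iff.mp hx)

instance : NoZeroDivisors EisensteinQuaternion where
  eq_zero_or_eq_zero_of_mul_eq_zero {x y} hxy := by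
    rwa [← reducedNorm_eq_zero_iff, reducedNorm_mul, mul_eq_zero, reducedNorm_eq_zero_iff,
      reducedNorm_eq_zero_iff] at hxy

lemma exists_reducedNorm_sub_mul_lt (x : EisensteinQuaternion) {g : EisensteinQuaternion}
    (hg : g ≠ 0) : ∃ q, reducedNorm (x - q * g) < reducedNorm g := by
  have hpos := reducedNorm_pos hg
  -- Dividing by `g` is multiplying by `star g` and dividing each coordinate by `reducedNorm g`.
  obtain ⟨a, b, hab⟩ := exists_eisensteinForm_sub_mul_le (x * star g).re (x * star g).imI hpos
  obtain ⟨c, d, hcd⟩ := exists_eisensteinForm_sub_mul_le (x * star g).imJ (x * star g).imK hpos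
  let q : EisensteinQuaternion := ⟨a, b, c, d⟩
  refine ⟨q, ?_⟩
  have hmul : (x - q * g) * star g = x * star g - q * (reducedNorm g : EisensteinQuaternion) := by
    rw [sub_mul, mul_assoc, mul_star_eq_reducedNorm]
  have hnorm : reducedNorm (x - q * g) * reducedNorm g =
      eisensteinForm ((x * star g).re - a * reducedNorm g) ((x * star g).imI - b * reducedNorm g) +
      eisensteinForm ((x * star g).imJ - c * reducedNorm g)
        ((x * star g).imK - d * reducedNorm g) := by
    rw [← reducedNorm_star g, ← reducedNorm_mul, hmul, reducedNorm_star, reducedNorm]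
    generalize x * star g = y
    simp [q]
  by_contra! hle
  nlinarith

instance : IsPrincipalIdealRing EisensteinQuaternion where
  principal I := by
    by_cases hI : I = ⊥
    · rw [hI]
      infer_instance
    obtain ⟨g, ⟨hgI, hg⟩, hmin⟩ := (measure fun x ↦ (reducedNorm x).toNat).wf.has_min
      {x | x ∈ I ∧ x ≠ 0} (I.ne_bot_iff.mp hI)
    refine ⟨g, le_antisymm (fun x hx ↦ ?_) ((Ideal.span_singleton_le_iff_mem I).mpr hgI)⟩
    obtain ⟨q, hq⟩ := exists_reducedNorm_sub_mul_lt x hg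
    have hmem : x - q * g ∈ I := I.sub_mem hx (I.mul_mem_left q hgI)
    have hzero : x - q * g = 0 := by
      by_contra hne
      refine hmin _ ⟨hmem, hne⟩ ?_
      exact (Int.toNat_lt_toNat (reducedNorm_pos hg)).mpr hq
    exact Ideal.mem_span_singleton'.mpr ⟨q, (sub_eq_zero.mp hzero).symm⟩

lemma finite_setOf_reducedNorm_eq (m : ℤ) : {x | reducedNorm x = m}.Finite := by
  let box := Set.Icc (-(2 * m)) (2 * m)
  have hbox : box.Finite := Set.finite_Icc _ _
  refine ((hbox.prod (hbox.prod (hbox.prod hbox))).preimage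
    (QuaternionAlgebra.equivProd (-1 : ℤ) (-1) (-1)).injective.injOn).subset ?_
  rintro x rfl
  simpa only [Set.mem_preimage, QuaternionAlgebra.equivProd_apply, Set.mem_prod, Set.mem_Icc, box,
    abs_le] using abs_coords_le_reducedNorm x

/-- The Eisenstein quaternions of reduced norm `m`. -/
noncomputable def sphere (m : ℤ) : Finset EisensteinQuaternion :=
  (finite_setOf_reducedNorm_eq m).toFinset

lemma mem_sphere {m : ℤ} {x : EisensteinQuaternion} : x ∈ sphere m ↔ reducedNorm x = m := by
  simp [sphere]

open Classical in
lemma card_sphere_filter_mem_span_singleton {g : EisensteinQuaternion} (hg : g ≠ 0) (m : ℤ) :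
    #{x ∈ sphere (m * reducedNorm g) | x ∈ Ideal.span {g}} = #(sphere m) := by
  have hsphere (y : EisensteinQuaternion) :
      y * g ∈ sphere (m * reducedNorm g) ↔ y ∈ sphere m := by
    rw [mem_sphere, mem_sphere, reducedNorm_mul, mul_left_inj' (reducedNorm_pos hg).ne']
  have himage : {x ∈ sphere (m * reducedNorm g) | x ∈ Ideal.span {g}} =
      (sphere m).image (· * g) := by
    ext x
    simp only [mem_filter, mem_image, Ideal.mem_span_singleton']
    constructor
    · rintro ⟨hx, y, rfl⟩
      exact ⟨y, (hsphere y).mp hx, rfl⟩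
    · rintro ⟨y, hy, rfl⟩
      exact ⟨(hsphere y).mpr hy, y, rfl⟩
  rw [himage, card_image_of_injective _ (mul_left_injective₀ hg)]

section Splitting

variable {R : Type*} [CommRing R] {w : R}

/-- The images of `ω, j, ωj` under the splitting `splitHom`. -/
def splitBasis (hw : w ^ 2 + w + 1 = 0) :
    QuaternionAlgebra.Basis (Matrix (Fin 2) (Fin 2) R) (-1 : ℤ) (-1) (-1) where
  i := !![w, 0; 0, -1 - w]
  j := !![0, -1; 1, 0]
  k := !![0, -w; -1 - w, 0]
  i_mul_i := by
    ext i j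
    fin_cases i <;> fin_cases j <;> simp <;> linear_combination hw
  j_mul_j := by ext i j; fin_cases i <;> fin_cases j <;> simp
  i_mul_j := by simp
  j_mul_i := by ext i j; fin_cases i <;> fin_cases j <;> simp [add_comm]

/-- A root `w` of `X² + X + 1` in `R` splits the Eisenstein quaternions over `R`: they act on `R²`
by `ω ↦ diag(w, w̄)`, where `w̄ = -1 - w` is the other root. -/
def splitHom (hw : w ^ 2 + w + 1 = 0) : EisensteinQuaternion →ₐ[ℤ] Matrix (Fin 2) (Fin 2) R :=
  (splitBasis hw).liftHom

variable (hw : w ^ 2 + w + 1 = 0)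

lemma splitHom_apply (x : EisensteinQuaternion) :
    splitHom hw x = !![x.re + x.imI * w, -(x.imJ + x.imK * w);
      x.imJ + x.imK * (-1 - w), x.re + x.imI * (-1 - w)] := by
  ext i j
  fin_cases i <;> fin_cases j <;>
    simp [splitHom, splitBasis, QuaternionAlgebra.Basis.lift, Matrix.intCast_apply, add_comm]

lemma det_splitHom (x : EisensteinQuaternion) : (splitHom hw x).det = reducedNorm x := by
  rw [splitHom_apply, det_fin_two_of, reducedNorm, eisensteinForm, eisensteinForm]
  push_cast
  linear_combination (-x.imI ^ 2 - x.imK ^ 2 : R) * hw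

/-- The left ideal of Eisenstein quaternions that annihilate `v` under `splitHom`. -/
def annihilator (v : Fin 2 → R) : Ideal EisensteinQuaternion where
  carrier := {x | splitHom hw x *ᵥ v = 0}
  zero_mem' := by rw [Set.mem_ofPred_eq, map_zero, zero_mulVec]
  add_mem' {x y} hx hy := by
    rw [Set.mem_ofPred_eq] at hx hy ⊢
    rw [map_add, add_mulVec, hx, hy, add_zero]
  smul_mem' q x hx := by
    rw [Set.mem_ofPred_eq] at hx ⊢
    rw [smul_eq_mul, map_mul, ← mulVec_mulVec, hx, mulVec_zero]

lemma mem_annihilator {v : Fin 2 → R} {x : EisensteinQuaternion} :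
    x ∈ annihilator hw v ↔ splitHom hw x *ᵥ v = 0 := Iff.rfl

end Splitting

end EisensteinQuaternion

lemma existsUnique_projectivization_mulVec_rep_eq_zero {K : Type*} [Field K]
    {M : Matrix (Fin 2) (Fin 2) K} (hM : M ≠ 0) (hdet : M.det = 0) :
    ∃! l : ℙ K (Fin 2 → K), M *ᵥ l.rep = 0 := by
  obtain ⟨v, hv, hMv⟩ := exists_mulVec_eq_zero_iff.mpr hdet
  refine existsUnique_of_exists_of_unique ⟨.mk K v hv, ?_⟩ fun l l' hl hl' ↦ ?_
  · obtain ⟨a, ha⟩ := Projectivization.exists_smul_eq_mk_rep K v hv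
    rw [← ha, Units.smul_def, mulVec_smul, hMv, smul_zero]
  · by_contra hne
    have hrep : Projectivization.rep ∘ ![l, l'] = ![l.rep, l'.rep] := by
      ext i
      fin_cases i <;> rfl
    have hli : LinearIndependent K ![l.rep, l'.rep] := hrep ▸ Projectivization.independent_iff.mp
      ((Projectivization.independent_pair_iff_ne l l').mpr hne)
    have hunit : IsUnit (of ![l.rep, l'.rep]) := linearIndependent_rows_iff_isUnit.mp hli
    have hmul : M * (of ![l.rep, l'.rep])ᵀ = 0 := by
      ext i j
      fin_cases j
      · exact congrFun hl i
      · exact congrFun hl' i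
    exact hM ((isUnit_transpose _ |>.mpr hunit).mul_left_eq_zero.mp hmul)

lemma exists_zmod_sq_add_self_add_one_eq_zero {p : ℕ} [Fact p.Prime] (hp3 : p % 3 = 1) :
    ∃ w : ZMod p, w ^ 2 + w + 1 = 0 := by
  have hdvd : 3 ∣ Nat.card (ZMod p)ˣ := by
    rw [Nat.card_eq_fintype_card, ZMod.card_units]
    omega
  obtain ⟨x, hx⟩ := exists_prime_orderOf_dvd_card' 3 hdvd
  have hroot : IsPrimitiveRoot (x : ZMod p) 3 :=
    IsPrimitiveRoot.coe_units_iff.mpr (hx ▸ IsPrimitiveRoot.orderOf x)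
  refine ⟨x, ?_⟩
  have hsum := hroot.geom_sum_eq_zero (by norm_num)
  simp only [sum_range_succ, sum_range_zero] at hsum
  linear_combination hsum

namespace EisensteinQuaternion

section ModPrime

variable {p : ℕ} [Fact p.Prime] {w : ZMod p}

lemma two_mul_add_one_ne_zero (hw : w ^ 2 + w + 1 = 0) (hp3 : p ≠ 3) : 2 * w + 1 ≠ 0 := by
  intro h
  have h3 : ((3 : ℕ) : ZMod p) = 0 := by
    push_cast
    linear_combination 4 * hw - (2 * w + 1) * h
  rw [ZMod.natCast_eq_zero_iff] at h3
  exact hp3 ((Nat.prime_dvd_prime_iff_eq Fact.out Nat.prime_three).mp h3)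

variable (hw : w ^ 2 + w + 1 = 0)

lemma splitHom_eq_zero_iff (hp3 : p ≠ 3) {x : EisensteinQuaternion} :
    splitHom hw x = 0 ↔ x ∈ Ideal.span {(p : EisensteinQuaternion)} := by
  have hne := two_mul_add_one_ne_zero hw hp3
  constructor
  · intro hx
    rw [splitHom_apply, ← Matrix.ext_iff] at hx
    simp only [Fin.forall_fin_two, of_apply, cons_val', cons_val_zero, cons_val_one,
      cons_val_fin_one, Matrix.zero_apply] at hx
    obtain ⟨⟨h00, h01⟩, h10, h11⟩ := hx
    have hI : (x.imI : ZMod p) = 0 := by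
      refine (mul_eq_zero.mp ?_).resolve_right hne
      linear_combination h00 - h11
    have hK : (x.imK : ZMod p) = 0 := by
      refine (mul_eq_zero.mp ?_).resolve_right hne
      linear_combination -h01 - h10
    have hre : (x.re : ZMod p) = 0 := by linear_combination h00 - w * hI
    have hJ : (x.imJ : ZMod p) = 0 := by linear_combination -h01 - w * hK
    rw [ZMod.intCast_zmod_eq_zero_iff_dvd] at hre hI hJ hK
    obtain ⟨a, ha⟩ := hre
    obtain ⟨b, hb⟩ := hI
    obtain ⟨c, hc⟩ := hJ
    obtain ⟨d, hd⟩ := hK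
    refine Ideal.mem_span_singleton'.mpr ⟨⟨a, b, c, d⟩, ?_⟩
    ext <;> simp [ha, hb, hc, hd, mul_comm]
  · rw [Ideal.mem_span_singleton']
    rintro ⟨y, rfl⟩
    simp

lemma splitHom_surjective (hp3 : p ≠ 3) : Function.Surjective (splitHom hw) := by
  have hne := two_mul_add_one_ne_zero hw hp3
  intro M
  obtain ⟨b, hb⟩ := ZMod.intCast_surjective ((M 0 0 - M 1 1) / (2 * w + 1))
  obtain ⟨d, hd⟩ := ZMod.intCast_surjective ((-M 0 1 - M 1 0) / (2 * w + 1))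
  obtain ⟨a, ha⟩ := ZMod.intCast_surjective (M 0 0 - (b : ZMod p) * w)
  obtain ⟨c, hc⟩ := ZMod.intCast_surjective (-M 0 1 - (d : ZMod p) * w)
  rw [eq_div_iff hne] at hb hd
  refine ⟨⟨a, b, c, d⟩, ?_⟩
  rw [splitHom_apply, eta_fin_two M]
  ext i j
  fin_cases i <;> fin_cases j <;> simp only [Fin.zero_eta, Fin.mk_one, of_apply, cons_val',
    cons_val_zero, cons_val_one, cons_val_fin_one]
  · linear_combination ha
  · linear_combination -hc
  · linear_combination hc - hd
  · linear_combination ha - hb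

lemma exists_mem_annihilator_splitHom_ne_zero (hp3 : p ≠ 3) {v : Fin 2 → ZMod p} (hv : v ≠ 0) :
    ∃ x ∈ annihilator hw v, splitHom hw x ≠ 0 := by
  obtain ⟨x, hx⟩ := splitHom_surjective hw hp3 !![-v 1, v 0; 0, 0]
  refine ⟨x, ?_, fun hzero ↦ hv (funext fun i ↦ ?_)⟩
  · rw [mem_annihilator, hx]
    ext i
    fin_cases i <;> simp [mulVec, dotProduct, mul_comm]
  · rw [hzero, ← Matrix.ext_iff] at hx
    fin_cases i
    · simpa using (hx 0 1).symm
    · simpa using (hx 0 0).symm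

lemma exists_annihilator_eq_span_singleton (hp3 : p ≠ 3) {v : Fin 2 → ZMod p} (hv : v ≠ 0) :
    ∃ g, reducedNorm g = p ∧ annihilator hw v = Ideal.span {g} := by
  obtain ⟨g, hg⟩ := (IsPrincipalIdealRing.principal (annihilator hw v)).principal
  refine ⟨g, ?_, hg⟩
  have hgv : splitHom hw g *ᵥ v = 0 := by
    rw [← mem_annihilator, hg]
    exact Ideal.mem_span_singleton_self g
  have hdvd : (p : ℤ) ∣ reducedNorm g := by
    rw [← ZMod.intCast_zmod_eq_zero_iff_dvd, ← det_splitHom hw]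
    exact exists_mulVec_eq_zero_iff.mp ⟨v, hv, hgv⟩
  obtain ⟨y, hy⟩ : ∃ y, y * g = (p : EisensteinQuaternion) := by
    rw [← Ideal.mem_span_singleton', ← Ideal.submodule_span_eq, ← hg, mem_annihilator]
    simp
  have hmul : reducedNorm y * reducedNorm g = p ^ 2 := by
    rw [← reducedNorm_mul, hy, reducedNorm_natCast]
  -- Otherwise `splitHom hw y` is invertible, so `splitHom hw` kills `g` and with it the ideal.
  have hdvd' : (p : ℤ) ∣ reducedNorm y := by
    by_contra hndvd
    rw [← ZMod.intCast_zmod_eq_zero_iff_dvd, ← det_splitHom hw] at hndvd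
    have hg0 : splitHom hw g = 0 := by
      refine ((isUnit_iff_isUnit_det _).mpr (Ne.isUnit hndvd)).mul_right_eq_zero.mp ?_
      rw [← map_mul, hy]
      simp
    obtain ⟨x, hxmem, hx⟩ := exists_mem_annihilator_splitHom_ne_zero hw hp3 hv
    obtain ⟨z, rfl⟩ := Ideal.mem_span_singleton'.mp (hg ▸ hxmem)
    exact hx (by rw [map_mul, hg0, mul_zero])
  obtain ⟨a, ha⟩ := hdvd'
  obtain ⟨b, hb⟩ := hdvd
  have hp0 : (p : ℤ) ≠ 0 := mod_cast (Fact.out : p.Prime).ne_zero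
  have hab : b * a = 1 := by
    refine mul_left_cancel₀ (pow_ne_zero 2 hp0) ?_
    linear_combination hmul - reducedNorm g * ha - p * a * hb
  have hb0 : 0 ≤ b := nonneg_of_mul_nonneg_right (hb ▸ reducedNorm_nonneg g)
    (by exact_mod_cast (Fact.out : p.Prime).pos)
  rw [hb, Int.eq_one_of_mul_eq_one_right hb0 hab, mul_one]

open Classical in
lemma card_sphere_filter_mem_annihilator (hp3 : p ≠ 3) {v : Fin 2 → ZMod p} (hv : v ≠ 0) (m : ℤ) :
    #{x ∈ sphere (p * m) | x ∈ annihilator hw v} = #(sphere m) := by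
  obtain ⟨g, hgp, hg⟩ := exists_annihilator_eq_span_singleton hw hp3 hv
  have hg0 : g ≠ 0 := by
    rintro rfl
    rw [reducedNorm_eq_zero_iff.mpr rfl] at hgp
    exact (Fact.out : p.Prime).ne_zero (by exact_mod_cast hgp.symm)
  rw [hg, mul_comm, ← hgp, card_sphere_filter_mem_span_singleton hg0]

open Classical in
lemma card_lines_filter_mem_annihilator [Fintype (ℙ (ZMod p) (Fin 2 → ZMod p))] (hp3 : p ≠ 3)
    {x : EisensteinQuaternion} (hx : (p : ℤ) ∣ reducedNorm x) :
    #{l : ℙ (ZMod p) (Fin 2 → ZMod p) | x ∈ annihilator hw l.rep} =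
      1 + p * if x ∈ Ideal.span {(p : EisensteinQuaternion)} then 1 else 0 := by
  simp only [mem_annihilator, ← splitHom_eq_zero_iff hw hp3]
  split_ifs with hx0
  · simp only [hx0, zero_mulVec, filter_true, card_univ]
    rw [← Nat.card_eq_fintype_card, Projectivization.card_of_finrank_two _ _ (by simp),
      Nat.card_zmod, mul_one, add_comm]
  · have hdet : (splitHom hw x).det = 0 := by
      rwa [det_splitHom, ZMod.intCast_zmod_eq_zero_iff_dvd]
    rw [mul_zero, add_zero, card_eq_one, singleton_iff_unique_mem]
    simpa using existsUnique_projectivization_mulVec_rep_eq_zero hx0 hdet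

open Classical in
lemma add_one_mul_card_sphere (hp3 : p % 3 = 1) (m : ℤ) :
    (p + 1) * #(sphere m) = #(sphere (p * m)) +
      p * #{x ∈ sphere (p * m) | x ∈ Ideal.span {(p : EisensteinQuaternion)}} := by
  obtain ⟨w, hw⟩ := exists_zmod_sq_add_self_add_one_eq_zero hp3
  have hp3' : p ≠ 3 := by omega
  have := Fintype.ofFinite (ℙ (ZMod p) (Fin 2 → ZMod p))
  calc (p + 1) * #(sphere m)
      = ∑ l : ℙ (ZMod p) (Fin 2 → ZMod p), #{x ∈ sphere (p * m) | x ∈ annihilator hw l.rep} := by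
        simp only [card_sphere_filter_mem_annihilator hw hp3' (Projectivization.rep_nonzero _),
          sum_const, card_univ, smul_eq_mul]
        rw [← Nat.card_eq_fintype_card, Projectivization.card_of_finrank_two _ _ (by simp),
          Nat.card_zmod]
    _ = ∑ x ∈ sphere (p * m), #{l : ℙ (ZMod p) (Fin 2 → ZMod p) | x ∈ annihilator hw l.rep} :=
        sum_card_bipartiteAbove_eq_sum_card_bipartiteBelow _
    _ = ∑ x ∈ sphere (p * m),
          (1 + p * if x ∈ Ideal.span {(p : EisensteinQuaternion)} then 1 else 0) :=
        sum_congr rfl fun x hx ↦ card_lines_filter_mem_annihilator hw hp3'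
          (mem_sphere.mp hx ▸ dvd_mul_right _ _)
    _ = _ := by rw [sum_add_distrib, ← mul_sum, card_filter, card_eq_sum_ones]

lemma card_sphere_prime_mul {m : ℤ} (hp3 : p % 3 = 1) (hm : ¬ (p : ℤ) ∣ m) :
    #(sphere (p * m)) = (p + 1) * #(sphere m) := by
  classical
  have hp0 : (p : ℤ) ≠ 0 := mod_cast (Fact.out : p.Prime).ne_zero
  rw [add_one_mul_card_sphere hp3, filter_false_of_mem, card_empty, mul_zero, add_zero]
  intro x hx hxp
  obtain ⟨y, rfl⟩ := Ideal.mem_span_singleton'.mp hxp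
  rw [mem_sphere, reducedNorm_mul, reducedNorm_natCast] at hx
  exact hm ⟨reducedNorm y, mul_left_cancel₀ hp0 (by linear_combination -hx)⟩

lemma card_sphere_prime_mul_prime_mul (hp3 : p % 3 = 1) (m : ℤ) :
    #(sphere (p * (p * m))) + p * #(sphere m) = (p + 1) * #(sphere (p * m)) := by
  classical
  have hp0 : (p : EisensteinQuaternion) ≠ 0 := by
    rw [Ne, ← reducedNorm_eq_zero_iff, reducedNorm_natCast]
    exact pow_ne_zero 2 (mod_cast (Fact.out : p.Prime).ne_zero)
  rw [add_one_mul_card_sphere hp3, ← card_sphere_filter_mem_span_singleton hp0 m,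
    reducedNorm_natCast, show m * (p : ℤ) ^ 2 = p * (p * m) by ring]

end ModPrime

end EisensteinQuaternion

lemma sub_one_mul_eq_of_recurrence {R : Type*} [CommRing R] {q : R} {u : ℕ → R}
    (hone : u 1 = (q + 1) * u 0) (hrec : ∀ k, u (k + 2) + q * u k = (q + 1) * u (k + 1)) (k : ℕ) :
    (q - 1) * u k = (q ^ (k + 1) - 1) * u 0 := by
  induction k using Nat.twoStepInduction with
  | zero => ring
  | one => linear_combination (q - 1) * hone
  | more k ih ih' => linear_combination (q - 1) * hrec k - q * ih + (q + 1) * ih'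

lemma EisensteinQuaternion.sub_one_mul_card_sphere {p : ℕ} (hp : p.Prime) (hp3 : p % 3 = 1) {m : ℤ}
    (hm : ¬ (p : ℤ) ∣ m) (k : ℕ) :
    ((p : ℤ) - 1) * #(sphere (p ^ k * m)) = (p ^ (k + 1) - 1) * #(sphere m) := by
  have : Fact p.Prime := ⟨hp⟩
  have key := sub_one_mul_eq_of_recurrence (q := (p : ℤ)) (u := fun k ↦ #(sphere (p ^ k * m)))
    (by simpa using mod_cast card_sphere_prime_mul hp3 hm)
    (fun k ↦ by
      have hrec := card_sphere_prime_mul_prime_mul hp3 (p ^ k * m)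
      rw [← mul_assoc (p : ℤ) _ m, ← pow_succ', ← mul_assoc, ← pow_succ'] at hrec
      exact_mod_cast hrec) k
  simpa using key

/-! ### Cores and abaci -/

section BetaSet

variable {μ : YoungDiagram}

/-- The first-column-hook sequence of a partition, shifted so that the empty partition has
sequence `-1, -2, -3, …`. -/
def betaSeq (μ : YoungDiagram) (i : ℕ) : ℤ := μ.rowLen i - i - 1

/-- The beta-set (Maya diagram) of a partition. -/
def betaSet (μ : YoungDiagram) : Set ℤ := Set.range (betaSeq μ)

lemma lt_rowLen_iff_lt_colLen {i j : ℕ} : j < μ.rowLen i ↔ i < μ.colLen j := by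
  rw [← YoungDiagram.mem_iff_lt_rowLen, YoungDiagram.mem_iff_lt_colLen]

lemma rowLen_eq_zero_of_colLen_le {i : ℕ} (hi : μ.colLen 0 ≤ i) : μ.rowLen i = 0 := by
  rwa [← not_lt, ← lt_rowLen_iff_lt_colLen, not_lt, Nat.le_zero] at hi

lemma betaSeq_strictAnti (μ : YoungDiagram) : StrictAnti (betaSeq μ) := fun i j hij ↦ by
  have := μ.rowLen_anti i j hij.le
  unfold betaSeq
  omega

lemma betaSet_injective : Function.Injective betaSet := fun μ ν h ↦ by
  have hseq : betaSeq μ = betaSeq ν := (betaSeq_strictAnti μ).dual_right.range_inj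
    (betaSeq_strictAnti ν).dual_right |>.mp h
  ext ⟨i, j⟩
  have hi := congrFun hseq i
  unfold betaSeq at hi
  rw [YoungDiagram.mem_cells, YoungDiagram.mem_cells, YoungDiagram.mem_iff_lt_rowLen,
    YoungDiagram.mem_iff_lt_rowLen]
  omega

lemma le_betaSeq_iff_mem {i j : ℕ} : (j : ℤ) - μ.colLen j ≤ betaSeq μ i ↔ (i, j) ∈ μ := by
  have hij : j < μ.rowLen i ↔ i < μ.colLen j := lt_rowLen_iff_lt_colLen
  rw [YoungDiagram.mem_iff_lt_rowLen, betaSeq]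
  omega

lemma hookLength_eq_sub {i j : ℕ} (hij : (i, j) ∈ μ) :
    (μ.hookLength i j : ℤ) = betaSeq μ i - (j - μ.colLen j) := by
  have hrow := YoungDiagram.mem_iff_lt_rowLen.mp hij
  have hcol := YoungDiagram.mem_iff_lt_colLen.mp hij
  unfold YoungDiagram.hookLength betaSeq
  omega

lemma exists_betaSeq_lt (μ : YoungDiagram) (z : ℤ) : ∃ i, betaSeq μ i < z := by
  refine ⟨(μ.rowLen 0 - z).toNat, ?_⟩
  have := μ.rowLen_anti 0 (μ.rowLen 0 - z).toNat (Nat.zero_le _)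
  unfold betaSeq
  omega

lemma notMem_betaSet_iff {z : ℤ} : z ∉ betaSet μ ↔ ∃ j : ℕ, (j : ℤ) - μ.colLen j = z := by
  constructor
  · intro hz
    -- `z` is the gap between beads `i - 1` and `i`.
    classical
    let i := Nat.find (exists_betaSeq_lt μ z)
    have hi : betaSeq μ i < z := Nat.find_spec (exists_betaSeq_lt μ z)
    unfold betaSeq at hi
    refine ⟨(z + i).toNat, ?_⟩
    have hle : μ.colLen (z + i).toNat ≤ i := by
      rw [← not_lt, ← lt_rowLen_iff_lt_colLen]
      omega
    have hge : i ≤ μ.colLen (z + i).toNat := by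
      rcases hi0 : i with _ | k
      · exact Nat.zero_le _
      have hk : z ≤ betaSeq μ k := not_lt.mp (Nat.find_min (exists_betaSeq_lt μ z) (by omega))
      have hne : betaSeq μ k ≠ z := fun h ↦ hz ⟨k, h⟩
      rw [Nat.succ_le_iff, ← lt_rowLen_iff_lt_colLen]
      unfold betaSeq at hk hne
      omega
    omega
  · rintro ⟨j, rfl⟩ ⟨i, hi⟩
    have hij : j < μ.rowLen i ↔ i < μ.colLen j := lt_rowLen_iff_lt_colLen
    unfold betaSeq at hi
    omega

/-- A `t`-core: a partition none of whose hook lengths is divisible by `t`. -/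
def IsCore (t : ℕ) (μ : YoungDiagram) : Prop := ∀ c ∈ μ.cells, ¬ t ∣ μ.hookLength c.1 c.2

-- The hook lengths are the differences between a bead and a lower gap.
lemma isCore_iff_forall_sub_mem_betaSet {t : ℕ} :
    IsCore t μ ↔ ∀ z ∈ betaSet μ, z - t ∈ betaSet μ := by
  constructor
  · rintro hμ _ ⟨i, rfl⟩
    by_contra hgap
    obtain ⟨j, hj⟩ := notMem_betaSet_iff.mp hgap
    have hij : (i, j) ∈ μ := le_betaSeq_iff_mem.mp (by omega)
    have hhook : μ.hookLength i j = t := by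
      have := hookLength_eq_sub hij
      omega
    exact hμ (i, j) hij hhook.symm.dvd
  · rintro hsub ⟨i, j⟩ hij ⟨m, hm⟩
    have hsub_mul (m : ℕ) : betaSeq μ i - t * m ∈ betaSet μ := by
      induction m with
      | zero => exact ⟨i, by simp⟩
      | succ m ih => convert hsub _ ih using 1; push_cast; ring
    refine notMem_betaSet_iff.mpr ⟨j, ?_⟩ (hsub_mul m)
    have hhook := hookLength_eq_sub hij
    rw [hm] at hhook
    push_cast at hhook
    linear_combination hhook

lemma card_eq_sum_rowLen {N : ℕ} (hN : μ.colLen 0 ≤ N) : μ.card = ∑ i ∈ range N, μ.rowLen i := by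
  have hrow (i : ℕ) : #{c ∈ μ.cells | c.1 = i} = μ.rowLen i := (μ.rowLen_eq_card).symm
  simp_rw [← hrow]
  refine card_eq_sum_card_fiberwise fun c hc ↦ ?_
  have hlt : c.1 < μ.colLen 0 := (YoungDiagram.mem_iff_lt_colLen.mp hc).trans_le
    (μ.colLen_anti 0 c.2 (Nat.zero_le _))
  simpa using hlt.trans_le hN

/-- The `N` largest elements of the beta-set. -/
def betaFinset (μ : YoungDiagram) (N : ℕ) : Finset ℤ :=
  (range N).map ⟨betaSeq μ, (betaSeq_strictAnti μ).injective⟩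

lemma mem_betaFinset {N : ℕ} (hN : μ.colLen 0 ≤ N) {z : ℤ} :
    z ∈ betaFinset μ N ↔ z ∈ betaSet μ ∧ -(N : ℤ) ≤ z := by
  have hlast : betaSeq μ N = -N - 1 := by
    simp [betaSeq, rowLen_eq_zero_of_colLen_le hN]
  simp only [betaFinset, mem_map, mem_range, Function.Embedding.coeFn_mk, betaSet, Set.mem_range]
  constructor
  · rintro ⟨i, hi, rfl⟩
    have := betaSeq_strictAnti μ hi
    exact ⟨⟨i, rfl⟩, by omega⟩
  · rintro ⟨⟨i, rfl⟩, hi⟩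
    exact ⟨i, (betaSeq_strictAnti μ).lt_iff_gt.mp (by omega), rfl⟩

lemma card_betaFinset (μ : YoungDiagram) (N : ℕ) : #(betaFinset μ N) = N := by
  simp [betaFinset]

lemma two_mul_sum_betaFinset {N : ℕ} (hN : μ.colLen 0 ≤ N) :
    2 * ∑ z ∈ betaFinset μ N, z = 2 * μ.card - N * (N + 1) := by
  have hgauss (n : ℕ) : 2 * ∑ i ∈ range n, ((i : ℤ) + 1) = n * (n + 1) := by
    induction n with
    | zero => simp
    | succ n ih =>
      rw [sum_range_succ, mul_add, ih]
      push_cast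
      ring
  rw [card_eq_sum_rowLen hN, ← hgauss, betaFinset, sum_map, ← mul_sub]
  push_cast
  rw [← sum_sub_distrib]
  simp [betaSeq, sub_sub]

lemma exists_betaSeq_eq {b : ℕ → ℤ} (hb : StrictAnti b) {N : ℕ}
    (hN : ∀ i, N ≤ i → b i = -i - 1) : ∃ μ, betaSeq μ = b := by
  have hanti : Antitone fun i ↦ b i + i := antitone_nat_of_succ_le fun i ↦ by
    have := hb (Nat.lt_add_one i)
    push_cast
    omega
  have hnonneg (i : ℕ) : 0 ≤ b i + i + 1 := by
    have h1 : b (i + N) + (i + N : ℕ) ≤ b i + i := hanti (Nat.le_add_right i N)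
    have h2 := hN (i + N) (by omega)
    omega
  let rows : List ℕ := List.ofFn fun i : Fin N ↦ (b i + i + 1).toNat
  have hrows : rows.SortedGE := by
    refine List.sortedGE_ofFn_iff.mpr fun i j hij ↦ ?_
    have : b j + j ≤ b i + i := hanti (Fin.val_le_of_le hij)
    omega
  refine ⟨YoungDiagram.ofRowLens rows hrows, funext fun i ↦ ?_⟩
  have hrowLen : (YoungDiagram.ofRowLens rows hrows).rowLen i = (b i + i + 1).toNat := by
    refine eq_of_forall_lt_iff fun j ↦ ?_
    rw [← YoungDiagram.mem_iff_lt_rowLen, YoungDiagram.mem_ofRowLens]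
    by_cases hi : i < N
    · simp [rows, hi]
    · have := hN i (by omega)
      simp only [rows, List.length_ofFn, hi, IsEmpty.exists_iff, false_iff, not_lt]
      omega
  rw [betaSeq, hrowLen, Int.toNat_of_nonneg (hnonneg i)]
  ring

lemma exists_strictAnti_range_eq {S : Set ℤ} {A : Finset ℤ}
    (hA : ∀ z, z ∈ A ↔ z ∈ S ∧ -(#A : ℤ) ≤ z)
    (hS : ∀ z < -(#A : ℤ), z ∈ S) :
    ∃ b : ℕ → ℤ, StrictAnti b ∧ (∀ i, #A ≤ i → b i = -i - 1) ∧ Set.range b = S := by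
  let e := A.orderEmbOfFin rfl
  have heA (i) : e i ∈ S ∧ -(#A : ℤ) ≤ e i := (hA _).mp (A.orderEmbOfFin_mem rfl i)
  let b (i : ℕ) : ℤ := if hi : i < #A then e (Fin.rev ⟨i, hi⟩) else -i - 1
  have hb_lt {i : ℕ} (hi : i < #A) : b i = e (Fin.rev ⟨i, hi⟩) := dif_pos hi
  have hb_ge {i : ℕ} (hi : #A ≤ i) : b i = -i - 1 := dif_neg hi.not_gt
  have hb : StrictAnti b := strictAnti_nat_of_succ_lt fun i ↦ by
    rcases lt_trichotomy (i + 1) #A with hi | hi | hi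
    · rw [hb_lt hi, hb_lt (by omega : i < #A)]
      exact e.strictMono (Fin.rev_lt_rev.mpr (Fin.mk_lt_mk.mpr (Nat.lt_add_one i)))
    · rw [hb_ge hi.ge, hb_lt (by omega : i < #A)]
      have := (heA (Fin.rev ⟨i, by omega⟩)).2
      omega
    · rw [hb_ge hi.le, hb_ge (by omega : #A ≤ i)]
      omega
  refine ⟨b, hb, fun i ↦ hb_ge, Set.ext fun z ↦ ?_⟩
  constructor
  · rintro ⟨i, rfl⟩
    rcases lt_or_ge i #A with hi | hi
    · exact hb_lt hi ▸ (heA _).1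
    · exact hS _ (by rw [hb_ge hi]; omega)
  · intro hz
    rcases lt_or_ge z (-#A) with hzA | hzA
    · exact ⟨(-z - 1).toNat, by rw [hb_ge (by omega)]; omega⟩
    · obtain ⟨i, rfl⟩ : z ∈ Set.range e := by
        rw [range_orderEmbOfFin]
        exact (hA z).mpr ⟨hz, hzA⟩
      exact ⟨i.rev, by rw [hb_lt i.rev.isLt, Fin.eta, Fin.rev_rev]⟩

lemma exists_betaSet_eq {S : Set ℤ} {A : Finset ℤ} (hA : ∀ z, z ∈ A ↔ z ∈ S ∧ -(#A : ℤ) ≤ z)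
    (hS : ∀ z < -(#A : ℤ), z ∈ S) : ∃ μ, betaSet μ = S := by
  obtain ⟨b, hb, hb_ge, rfl⟩ := exists_strictAnti_range_eq hA hS
  obtain ⟨μ, rfl⟩ := exists_betaSeq_eq hb hb_ge
  exact ⟨μ, rfl⟩

end BetaSet

section Abacus

variable {t : ℕ} [NeZero t]

/-- The beads of an abacus with `t` runners whose runner `r` is filled exactly at the positions
below `c r`; position `m` of runner `r` is the integer `m * t + r`. -/
def abacus (c : Fin t → ℤ) : Set ℤ := {z | (z.divModEquiv t).1 < c (z.divModEquiv t).2}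

lemma divModEquiv_symm_mem_abacus {c : Fin t → ℤ} {m : ℤ} {r : Fin t} :
    (Int.divModEquiv t).symm (m, r) ∈ abacus c ↔ m < c r := by
  rw [abacus, Set.mem_ofPred_eq, Equiv.apply_symm_apply]

lemma abacus_injective : Function.Injective (abacus (t := t)) := fun c d h ↦ by
  refine funext fun r ↦ eq_of_forall_lt_iff fun m ↦ ?_
  rw [← divModEquiv_symm_mem_abacus, h, divModEquiv_symm_mem_abacus]

lemma divModEquiv_symm_sub (m : ℤ) (r : Fin t) :
    (Int.divModEquiv t).symm (m, r) - t = (Int.divModEquiv t).symm (m - 1, r) := by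
  simp only [Int.divModEquiv_symm_apply]
  ring

lemma sub_mem_abacus {c : Fin t → ℤ} {z : ℤ} (hz : z ∈ abacus c) : z - t ∈ abacus c := by
  obtain ⟨⟨m, r⟩, rfl⟩ := (Int.divModEquiv t).symm.surjective z
  rw [divModEquiv_symm_mem_abacus] at hz
  rw [divModEquiv_symm_sub, divModEquiv_symm_mem_abacus]
  omega

lemma exists_eq_Iio {S : Set ℤ} (hsub : ∀ m ∈ S, m - 1 ∈ S) (hne : S.Nonempty) (hbdd : BddAbove S) :
    ∃ c, S = Set.Iio c := by
  obtain ⟨M, hMS, hM⟩ := Int.exists_greatest_of_bdd hbdd hne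
  refine ⟨M + 1, Set.ext fun m ↦ ⟨fun hm ↦ Int.lt_add_one_of_le (hM m hm), fun hm ↦ ?_⟩⟩
  exact Int.leInductionDown hMS (fun n _ ↦ hsub n) m (Int.lt_add_one_iff.mp hm)

lemma exists_abacus_eq {S : Set ℤ} (hsub : ∀ z ∈ S, z - t ∈ S) {a b : ℤ} (ha : ∀ z < a, z ∈ S)
    (hb : ∀ z ∈ S, z < b) : ∃ c : Fin t → ℤ, abacus c = S := by
  have ht : (1 : ℤ) ≤ t := mod_cast NeZero.one_le
  have hrunner (r : Fin t) : ∃ c, {m | (Int.divModEquiv t).symm (m, r) ∈ S} = Set.Iio c := by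
    refine exists_eq_Iio (fun m hm ↦ ?_) ⟨-|a| - 1, ha _ ?_⟩ ⟨|b|, fun m hm ↦ ?_⟩
    · rw [Set.mem_ofPred_eq, ← divModEquiv_symm_sub]
      exact hsub _ hm
    · have hr : (r : ℤ) < t := mod_cast r.isLt
      rw [Int.divModEquiv_symm_apply]
      nlinarith [neg_abs_le a, abs_nonneg a]
    · have hlt := hb _ hm
      rw [Int.divModEquiv_symm_apply] at hlt
      by_contra! hlt'
      nlinarith [le_abs_self b, abs_nonneg b, Int.natCast_nonneg (r : ℕ)]
  choose c hc using hrunner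
  refine ⟨c, Set.ext fun z ↦ ?_⟩
  obtain ⟨⟨m, r⟩, rfl⟩ := (Int.divModEquiv t).symm.surjective z
  rw [divModEquiv_symm_mem_abacus, ← Set.mem_Iio, ← hc, Set.mem_ofPred_eq]

/-- The beads of `abacus c` at positions `-ℓ` and above. -/
noncomputable def abacusFinset (c : Fin t → ℤ) (ℓ : ℕ) : Finset ℤ :=
  (univ.sigma fun r ↦ Ico (-(ℓ : ℤ)) (c r)).map
    ((Equiv.sigmaEquivProd _ _).trans
      ((Equiv.prodComm _ _).trans (Int.divModEquiv t).symm)).toEmbedding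

lemma neg_le_divModEquiv_symm_iff {ℓ : ℕ} {m : ℤ} {r : Fin t} :
    -((t * ℓ : ℕ) : ℤ) ≤ (Int.divModEquiv t).symm (m, r) ↔ -(ℓ : ℤ) ≤ m := by
  have hr : (r : ℤ) < t := mod_cast r.isLt
  have ht : (0 : ℤ) < t := mod_cast NeZero.pos t
  rw [Int.divModEquiv_symm_apply]
  push_cast
  constructor
  · intro h
    have : 0 < (m + ℓ + 1) * t := by linarith
    have := pos_of_mul_pos_left this ht.le
    omega
  · intro h
    have := mul_le_mul_of_nonneg_right h ht.le
    linarith [Int.natCast_nonneg (r : ℕ)]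

lemma mem_abacusFinset {c : Fin t → ℤ} {ℓ : ℕ} {z : ℤ} :
    z ∈ abacusFinset c ℓ ↔ z ∈ abacus c ∧ -((t * ℓ : ℕ) : ℤ) ≤ z := by
  obtain ⟨⟨m, r⟩, rfl⟩ := (Int.divModEquiv t).symm.surjective z
  rw [divModEquiv_symm_mem_abacus, neg_le_divModEquiv_symm_iff, abacusFinset, mem_map_equiv]
  simp only [Equiv.symm_trans_apply, Equiv.symm_symm, Equiv.apply_symm_apply, Equiv.prodComm_symm,
    Equiv.prodComm_apply, Prod.swap_prod_mk, Equiv.sigmaEquivProd_symm_apply, mem_sigma, mem_univ,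
    true_and, mem_Ico, and_comm]

lemma mem_abacus_of_lt {c : Fin t → ℤ} {ℓ : ℕ} (hℓ : ∀ r, -(ℓ : ℤ) ≤ c r) {z : ℤ}
    (hz : z < -((t * ℓ : ℕ) : ℤ)) : z ∈ abacus c := by
  obtain ⟨⟨m, r⟩, rfl⟩ := (Int.divModEquiv t).symm.surjective z
  rw [divModEquiv_symm_mem_abacus]
  rw [← not_le, neg_le_divModEquiv_symm_iff, not_le] at hz
  exact hz.trans_le (hℓ r)

lemma card_abacusFinset {c : Fin t → ℤ} {ℓ : ℕ} (hℓ : ∀ r, -(ℓ : ℤ) ≤ c r) :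
    (#(abacusFinset c ℓ) : ℤ) = ∑ r, c r + t * ℓ := by
  rw [abacusFinset, card_map, card_sigma]
  push_cast
  rw [sum_congr rfl fun r _ ↦ Int.card_Ico_of_le _ _ (hℓ r)]
  simp [sum_add_distrib]

lemma two_mul_sum_Ico_id {a b : ℤ} (hab : a ≤ b) :
    2 * ∑ m ∈ Ico a b, m = b * (b - 1) - a * (a - 1) := by
  induction b, hab using Int.leInduction with
  | base => simp
  | succ b hab ih =>
    rw [← insert_Ico_right_eq_Ico_add_one hab, sum_insert right_notMem_Ico, mul_add, ih]
    ring

lemma two_mul_sum_fin_val (t : ℕ) : 2 * ∑ r : Fin t, ((r : ℕ) : ℤ) = t * (t - 1) := by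
  rw [Fin.sum_univ_eq_sum_range fun r ↦ (r : ℤ)]
  induction t with
  | zero => simp
  | succ n ih =>
    rw [sum_range_succ, mul_add, ih]
    push_cast
    ring

lemma two_mul_sum_abacusFinset {c : Fin t → ℤ} {ℓ : ℕ} (hℓ : ∀ r, -(ℓ : ℤ) ≤ c r) :
    2 * ∑ z ∈ abacusFinset c ℓ, z =
      ∑ r : Fin t, (t * c r ^ 2 + 2 * r * c r) - t * ∑ r, c r - t * ℓ * (t * ℓ + 1) := by
  have hrunner (r : Fin t) : 2 * ∑ m ∈ Ico (-(ℓ : ℤ)) (c r), (m * t + r) =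
      t * c r ^ 2 + 2 * r * c r - t * c r - (t * ℓ * (ℓ + 1) - 2 * r * ℓ) := by
    rw [sum_add_distrib, ← sum_mul, sum_const, nsmul_eq_mul, Int.card_Ico_of_le _ _ (hℓ r)]
    linear_combination t * two_mul_sum_Ico_id (hℓ r)
  rw [abacusFinset, sum_map, sum_sigma]
  simp only [Equiv.coe_toEmbedding, Equiv.trans_apply, Equiv.sigmaEquivProd_apply,
    Equiv.prodComm_apply, Prod.swap_prod_mk, Int.divModEquiv_symm_apply]
  rw [mul_sum, sum_congr rfl fun r _ ↦ hrunner r]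
  simp only [sum_sub_distrib, ← mul_sum, ← sum_mul, sum_const, card_univ, Fintype.card_fin,
    nsmul_eq_mul]
  linear_combination ℓ * two_mul_sum_fin_val t

end Abacus

lemma exists_nat_forall_neg_le {ι : Type*} [Finite ι] (c : ι → ℤ) (N : ℕ) :
    ∃ ℓ : ℕ, N ≤ ℓ ∧ ∀ i, -(ℓ : ℤ) ≤ c i := by
  obtain ⟨a, ha⟩ := (Set.finite_range c).bddBelow
  refine ⟨max N a.natAbs, le_max_left _ _, fun i ↦ ?_⟩
  have := ha ⟨i, rfl⟩
  omega

section Core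

variable {t : ℕ} [NeZero t] {μ : YoungDiagram} {c : Fin t → ℤ}

lemma betaFinset_eq_abacusFinset (h : betaSet μ = abacus c) {ℓ : ℕ} (hμ : μ.colLen 0 ≤ t * ℓ) :
    betaFinset μ (t * ℓ) = abacusFinset c ℓ := by
  ext z
  rw [mem_betaFinset hμ, mem_abacusFinset, h]

lemma sum_eq_zero_of_betaSet_eq_abacus (h : betaSet μ = abacus c) : ∑ r, c r = 0 := by
  obtain ⟨ℓ, hμ, hℓ⟩ := exists_nat_forall_neg_le c (μ.colLen 0)
  have hcard := card_abacusFinset hℓ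
  rw [← betaFinset_eq_abacusFinset h (hμ.trans (Nat.le_mul_of_pos_left ℓ (NeZero.pos t))),
    card_betaFinset] at hcard
  push_cast at hcard
  linarith

lemma two_mul_card_of_betaSet_eq_abacus (h : betaSet μ = abacus c) :
    (2 * μ.card : ℤ) = ∑ r : Fin t, (t * c r ^ 2 + 2 * r * c r) := by
  obtain ⟨ℓ, hμ, hℓ⟩ := exists_nat_forall_neg_le c (μ.colLen 0)
  have hμ' : μ.colLen 0 ≤ t * ℓ := hμ.trans (Nat.le_mul_of_pos_left ℓ (NeZero.pos t))
  have hsum := two_mul_sum_abacusFinset hℓ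
  rw [← betaFinset_eq_abacusFinset h hμ', two_mul_sum_betaFinset hμ',
    sum_eq_zero_of_betaSet_eq_abacus h] at hsum
  push_cast at hsum
  linarith

lemma exists_betaSet_eq_abacus (hc : ∑ r, c r = 0) : ∃ μ, betaSet μ = abacus c := by
  obtain ⟨ℓ, -, hℓ⟩ := exists_nat_forall_neg_le c 0
  have hcard : #(abacusFinset c ℓ) = t * ℓ := by
    have := card_abacusFinset hℓ
    rw [hc, zero_add] at this
    exact_mod_cast this
  refine exists_betaSet_eq (A := abacusFinset c ℓ) (fun z ↦ ?_) fun z hz ↦ ?_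
  · rw [hcard, mem_abacusFinset]
  · exact mem_abacus_of_lt hℓ (hcard ▸ hz)

lemma isCore_iff_exists_betaSet_eq_abacus :
    IsCore t μ ↔ ∃ c : Fin t → ℤ, betaSet μ = abacus c := by
  rw [isCore_iff_forall_sub_mem_betaSet]
  constructor
  · intro hsub
    obtain ⟨c, hc⟩ := exists_abacus_eq (a := -μ.colLen 0) (b := μ.rowLen 0) hsub
      (fun z hz ↦ ⟨(-z - 1).toNat, by
        rw [betaSeq, rowLen_eq_zero_of_colLen_le (by omega)]
        omega⟩)
      (by
        rintro _ ⟨i, rfl⟩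
        have := μ.rowLen_anti 0 i (Nat.zero_le i)
        unfold betaSeq
        omega)
    exact ⟨c, hc.symm⟩
  · rintro ⟨c, hc⟩
    rw [hc]
    exact fun _ ↦ sub_mem_abacus

/-- The `t`-core whose abacus has charges `c`. -/
noncomputable def coreOfCharges (hc : ∑ r, c r = 0) : YoungDiagram :=
  (exists_betaSet_eq_abacus hc).choose

lemma betaSet_coreOfCharges (hc : ∑ r, c r = 0) : betaSet (coreOfCharges hc) = abacus c :=
  (exists_betaSet_eq_abacus hc).choose_spec

/-- The Garvan–Kim–Stanton parametrization of `t`-cores by the charges of their abacus. -/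
noncomputable def coreEquiv (t : ℕ) [NeZero t] :
    {c : Fin t → ℤ // ∑ r, c r = 0} ≃ {μ : YoungDiagram // IsCore t μ} :=
  Equiv.ofBijective (fun c ↦ ⟨coreOfCharges c.2,
      isCore_iff_exists_betaSet_eq_abacus.mpr ⟨c, betaSet_coreOfCharges c.2⟩⟩) <| by
    refine ⟨fun c d hcd ↦ Subtype.ext (abacus_injective ?_), fun ⟨μ, hμ⟩ ↦ ?_⟩
    · rw [← betaSet_coreOfCharges c.2, ← betaSet_coreOfCharges d.2, Subtype.mk.inj hcd]
    · obtain ⟨c, hc⟩ := isCore_iff_exists_betaSet_eq_abacus.mp hμ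
      have hc0 := sum_eq_zero_of_betaSet_eq_abacus hc
      exact ⟨⟨c, hc0⟩, Subtype.ext (betaSet_injective ((betaSet_coreOfCharges hc0).trans hc.symm))⟩

lemma two_mul_card_coreEquiv (c : {c : Fin t → ℤ // ∑ r, c r = 0}) :
    (2 * (coreEquiv t c).1.card : ℤ) = ∑ r : Fin t, (t * c.1 r ^ 2 + 2 * r * c.1 r) :=
  two_mul_card_of_betaSet_eq_abacus (betaSet_coreOfCharges c.2)

end Core

/-! ### Counting pairs of `3`-cores -/

/-- Triples of integers with sum zero, with coordinates chosen so that the size of the associated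
`3`-core becomes an Eisenstein norm. -/
def chargesEquiv : ℤ × ℤ ≃ {c : Fin 3 → ℤ // ∑ r, c r = 0} where
  toFun v := ⟨![-v.1, v.2, v.1 - v.2], by simp [Fin.sum_univ_three]⟩
  invFun c := (-c.1 0, c.1 1)
  left_inv v := by simp
  right_inv c := by
    have hc := c.2
    rw [Fin.sum_univ_three] at hc
    refine Subtype.ext (funext fun r ↦ ?_)
    fin_cases r
    · simp
    · simp
    · simp only [neg_neg]
      change -c.1 0 - c.1 1 = c.1 2
      linear_combination -hc

/-- The parametrization of `3`-cores by `ℤ × ℤ`. -/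
noncomputable def threeCoreEquiv : ℤ × ℤ ≃ {μ : YoungDiagram // μ.IsThreeCore} :=
  chargesEquiv.trans (coreEquiv 3)

lemma three_mul_card_threeCoreEquiv_add_one (v : ℤ × ℤ) :
    (3 * (threeCoreEquiv v).1.card + 1 : ℤ) = eisensteinForm (3 * v.1 + 1) (3 * v.2) := by
  have hcard : (2 * (threeCoreEquiv v).1.card : ℤ) =
      3 * v.1 ^ 2 + (3 * v.2 ^ 2 + 2 * v.2) + (3 * (v.1 - v.2) ^ 2 + 4 * (v.1 - v.2)) := by
    refine (two_mul_card_coreEquiv (chargesEquiv v)).trans ?_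
    rw [Fin.sum_univ_three]
    change (3 * (-v.1) ^ 2 + 2 * 0 * -v.1) + (3 * v.2 ^ 2 + 2 * 1 * v.2) +
      (3 * (v.1 - v.2) ^ 2 + 2 * 2 * (v.1 - v.2)) = _
    ring
  refine mul_left_cancel₀ two_ne_zero ?_
  unfold eisensteinForm
  linear_combination 3 * hcard

-- An orbit-counting argument: `ρ` identifies the fibres of `φ` over a `σ`-orbit.
lemma card_eq_card_mul_card_filter {α β : Type*} [DecidableEq β] {T : Finset α} {O : Finset β}
    {φ : α → β} {u : β} (ρ : Equiv.Perm α) (hρ : ∀ x, ρ x ∈ T ↔ x ∈ T) {σ : Equiv.Perm β}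
    (hφ : ∀ x, φ (ρ x) = σ (φ x)) (hT : ∀ x ∈ T, φ x ∈ O) (hO : ∀ b ∈ O, ∃ i : ℕ, (σ ^ i) u = b) :
    #T = #O * #{x ∈ T | φ x = u} := by
  have hρ_pow (i : ℕ) (x : α) : (ρ ^ i) x ∈ T ↔ x ∈ T := by
    induction i with
    | zero => rfl
    | succ i ih => rw [pow_succ', Equiv.Perm.mul_apply, hρ, ih]
  have hφ_pow (i : ℕ) (x : α) : φ ((ρ ^ i) x) = (σ ^ i) (φ x) := by
    induction i with
    | zero => rfl
    | succ i ih => rw [pow_succ', Equiv.Perm.mul_apply, hφ, ih, pow_succ', Equiv.Perm.mul_apply]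
  rw [card_eq_sum_card_fiberwise hT]
  refine sum_const_nat fun b hb ↦ ?_
  obtain ⟨i, rfl⟩ := hO b hb
  refine (card_equiv (ρ ^ i) fun x ↦ ?_).symm
  rw [mem_filter, mem_filter, hρ_pow, hφ_pow, (σ ^ i).apply_eq_iff_eq]

/-- Multiplication by the sixth root of unity `1 + ω`, in the coordinates `(a, b)` of `a + bω`. -/
def eisensteinRotate (R : Type*) [CommRing R] : Equiv.Perm (R × R) where
  toFun v := (v.1 - v.2, v.1)
  invFun v := (v.2, v.2 - v.1)
  left_inv v := by simp
  right_inv v := by simp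

lemma eisensteinForm_eisensteinRotate {R : Type*} [CommRing R] (v : R × R) :
    eisensteinForm (eisensteinRotate R v).1 (eisensteinRotate R v).2 = eisensteinForm v.1 v.2 := by
  simp only [eisensteinRotate, eisensteinForm, Equiv.coe_fn_mk]
  ring

/-- Reduction modulo `3` of an Eisenstein integer given by its coordinates. -/
def residue (v : ℤ × ℤ) : ZMod 3 × ZMod 3 := (v.1, v.2)

lemma residue_eisensteinRotate (v : ℤ × ℤ) :
    residue (eisensteinRotate ℤ v) = eisensteinRotate (ZMod 3) (residue v) := by
  simp [residue, eisensteinRotate]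

/-- The residues of norm `1`, which are exactly those of the six units. -/
def unitResidues : Finset (ZMod 3 × ZMod 3) := {b | eisensteinForm b.1 b.2 = 1}

lemma card_unitResidues : #unitResidues = 6 := by decide

lemma exists_eisensteinRotate_pow_eq {b : ZMod 3 × ZMod 3} (hb : b ∈ unitResidues) :
    ∃ i : ℕ, (eisensteinRotate (ZMod 3) ^ i) (1, 0) = b := by
  have h : ∀ b ∈ unitResidues,
      ∃ i : Fin 6, (eisensteinRotate (ZMod 3) ^ (i : ℕ)) (1, 0) = b := by decide
  obtain ⟨i, hi⟩ := h b hb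
  exact ⟨i, hi⟩

/-- The pairs of Eisenstein integers, given by their coordinates, whose norms add up to `m`. -/
noncomputable def normPairs (m : ℤ) : Finset ((ℤ × ℤ) × ℤ × ℤ) :=
  (EisensteinQuaternion.sphere m).map ((QuaternionAlgebra.equivProd (-1 : ℤ) (-1) (-1)).trans
    (Equiv.prodAssoc ℤ ℤ (ℤ × ℤ)).symm).toEmbedding

lemma mem_normPairs {m : ℤ} {v : (ℤ × ℤ) × ℤ × ℤ} :
    v ∈ normPairs m ↔ eisensteinForm v.1.1 v.1.2 + eisensteinForm v.2.1 v.2.2 = m := by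
  rw [normPairs, mem_map_equiv, EisensteinQuaternion.mem_sphere]
  rfl

lemma residue_mem_unitResidues {m : ℤ} (hm : m % 3 = 2) {v : (ℤ × ℤ) × ℤ × ℤ}
    (hv : v ∈ normPairs m) : residue v.1 ∈ unitResidues ∧ residue v.2 ∈ unitResidues := by
  have hmod : ∀ a b : ZMod 3 × ZMod 3, eisensteinForm a.1 a.2 + eisensteinForm b.1 b.2 = 2 →
      a ∈ unitResidues ∧ b ∈ unitResidues := by decide
  have hm3 : (m : ZMod 3) = 2 := (ZMod.intCast_eq_intCast_iff' m 2 3).mpr hm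
  refine hmod _ _ ?_
  rw [← hm3, ← mem_normPairs.mp hv, Int.cast_add, intCast_eisensteinForm, intCast_eisensteinForm]
  rfl

lemma card_normPairs {m : ℤ} (hm : m % 3 = 2) :
    #(normPairs m) = 36 * #{v ∈ normPairs m | residue v.1 = (1, 0) ∧ residue v.2 = (1, 0)} := by
  have hfst : #(normPairs m) = 6 * #{v ∈ normPairs m | residue v.1 = (1, 0)} := by
    rw [← card_unitResidues]
    exact card_eq_card_mul_card_filter ((eisensteinRotate ℤ).prodCongr (Equiv.refl _))
      (fun v ↦ by simp [mem_normPairs, eisensteinForm_eisensteinRotate])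
      (fun v ↦ residue_eisensteinRotate v.1) (fun v hv ↦ (residue_mem_unitResidues hm hv).1)
      fun b ↦ exists_eisensteinRotate_pow_eq
  have hsnd : #{v ∈ normPairs m | residue v.1 = (1, 0)} =
      6 * #{v ∈ {v ∈ normPairs m | residue v.1 = (1, 0)} | residue v.2 = (1, 0)} := by
    rw [← card_unitResidues]
    exact card_eq_card_mul_card_filter ((Equiv.refl _).prodCongr (eisensteinRotate ℤ))
      (fun v ↦ by simp [mem_normPairs, eisensteinForm_eisensteinRotate])
      (fun v ↦ residue_eisensteinRotate v.2)
      (fun v hv ↦ (residue_mem_unitResidues hm (mem_filter.mp hv).1).2)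
      fun b ↦ exists_eisensteinRotate_pow_eq
  rw [hfst, hsnd, filter_filter, ← mul_assoc]
  norm_num only

lemma A3_eq_ncard (n : ℕ) :
    A3 n = {v : (ℤ × ℤ) × ℤ × ℤ |
      (threeCoreEquiv v.1).1.card + (threeCoreEquiv v.2).1.card = n}.ncard := by
  have hinj : Function.Injective fun v ↦ (threeCoreEquiv v).1 :=
    Subtype.val_injective.comp threeCoreEquiv.injective
  rw [← Set.ncard_image_of_injective _ (hinj.prodMap hinj)]
  refine congrArg Set.ncard (Set.ext fun μ ↦ ⟨?_, ?_⟩)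
  · rintro ⟨hcard, h₁, h₂⟩
    refine ⟨(threeCoreEquiv.symm ⟨μ.1, h₁⟩, threeCoreEquiv.symm ⟨μ.2, h₂⟩), ?_, ?_⟩
    · simpa using hcard
    · simp
  · rintro ⟨v, hcard, rfl⟩
    exact ⟨hcard, (threeCoreEquiv v.1).2, (threeCoreEquiv v.2).2⟩

/-- The Eisenstein integer `3v + 1`, in coordinates. -/
def threeMulAddOne (v : ℤ × ℤ) : ℤ × ℤ := (3 * v.1 + 1, 3 * v.2)

lemma threeMulAddOne_injective : Function.Injective threeMulAddOne := by
  rintro ⟨a, b⟩ ⟨c, d⟩ h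
  simp only [threeMulAddOne, Prod.mk.injEq] at h ⊢
  omega

lemma residue_eq_iff {v : ℤ × ℤ} : residue v = (1, 0) ↔ ∃ u, threeMulAddOne u = v := by
  constructor
  · intro h
    simp only [residue, Prod.mk.injEq] at h
    have h₁ : v.1 % 3 = 1 := (ZMod.intCast_eq_intCast_iff' v.1 1 3).mp (by simpa using h.1)
    have h₂ : v.2 % 3 = 0 := (ZMod.intCast_eq_intCast_iff' v.2 0 3).mp (by simpa using h.2)
    refine ⟨(v.1 / 3, v.2 / 3), Prod.ext ?_ ?_⟩ <;> simp only [threeMulAddOne] <;> omega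
  · rintro ⟨u, rfl⟩
    have h3 : (3 : ZMod 3) = 0 := rfl
    simp [residue, threeMulAddOne, h3]

lemma A3_eq_card_filter (n : ℕ) :
    A3 n = #{v ∈ normPairs (3 * n + 2) | residue v.1 = (1, 0) ∧ residue v.2 = (1, 0)} := by
  have hmem (v : (ℤ × ℤ) × ℤ × ℤ) :
      Prod.map threeMulAddOne threeMulAddOne v ∈ normPairs (3 * n + 2) ↔
        (threeCoreEquiv v.1).1.card + (threeCoreEquiv v.2).1.card = n := by
    rw [mem_normPairs]
    simp only [Prod.map_fst, Prod.map_snd, threeMulAddOne,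
      ← three_mul_card_threeCoreEquiv_add_one]
    omega
  rw [A3_eq_ncard, ← Set.ncard_coe_finset, ← Set.ncard_image_of_injective _
    (threeMulAddOne_injective.prodMap threeMulAddOne_injective)]
  refine congrArg Set.ncard (Set.ext fun v ↦ ?_)
  rw [Set.mem_image, mem_coe, mem_filter, residue_eq_iff, residue_eq_iff]
  constructor
  · rintro ⟨u, hu, rfl⟩
    exact ⟨(hmem u).mpr hu, ⟨u.1, rfl⟩, u.2, rfl⟩
  · rintro ⟨hv, ⟨u₁, hu₁⟩, u₂, hu₂⟩
    obtain rfl : Prod.map threeMulAddOne threeMulAddOne (u₁, u₂) = v := Prod.ext hu₁ hu₂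
    exact ⟨(u₁, u₂), (hmem _).mp hv, rfl⟩

lemma card_sphere_eq_mul_A3 (n : ℕ) : #(EisensteinQuaternion.sphere (3 * n + 2)) = 36 * A3 n := by
  rw [A3_eq_card_filter, ← card_normPairs (by omega), normPairs, card_map]

/-- For a prime p ≡ 1 (mod 3) with p ∤ 3n+2:
(p−1)·A₃(pᵏn + (2pᵏ−2)/3) = (p^{k+1}−1)·A₃(n). -/
theorem A3_mult_one_mod_three (p k n : ℕ) (hp : p.Prime) (hp3 : p % 3 = 1)
    (hpn : ¬ p ∣ 3 * n + 2) :
    (p - 1) * A3 (p ^ k * n + (2 * p ^ k - 2) / 3) = (p ^ (k + 1) - 1) * A3 n := by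
  set N := p ^ k * n + (2 * p ^ k - 2) / 3 with hN
  have hindex : 3 * N + 2 = p ^ k * (3 * n + 2) := by
    have hpow : p ^ k % 3 = 1 := by rw [Nat.pow_mod, hp3, one_pow, Nat.one_mod]
    have hdiv : 3 * ((2 * p ^ k - 2) / 3) + 2 = 2 * p ^ k := by omega
    linear_combination hdiv + 3 * hN
  have hsphere := EisensteinQuaternion.sub_one_mul_card_sphere hp hp3
    (m := 3 * n + 2) (mod_cast hpn) k
  rw [show (p ^ k * (3 * n + 2) : ℤ) = 3 * N + 2 from mod_cast hindex.symm,
    card_sphere_eq_mul_A3, card_sphere_eq_mul_A3] at hsphere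
  push_cast at hsphere
  zify [hp.one_le, Nat.one_le_pow (k + 1) p hp.pos]
  refine mul_left_cancel₀ (by norm_num : (36 : ℤ) ≠ 0) ?_
  linear_combination hsphere
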